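/- There exist constants γ* > 0 and ε* > 0 such that the probability (over the random choice of the 2k hubs and the random perfect matching) that the total variation mixing time satisfies t_mix(ε*) ≥ γ* · n^{(k+2)/(k+1)} tends to 1 as n → ∞. -/

import Mathlib

/-!
The bound holds for every configuration of hubs and every perfect matching, with constants depending
only on `k`; randomness only enters through the existence of configurations (`exists_isConfig`).

A step of the chain is an i.i.d. choice between `x ↦ x + 1`, `x ↦ x - 1`, `x ↦ μ x` and `x ↦ x`
with probabilities `p`, `q`, `a`, `1 - p - q - a`. Hence
`X_t = X_0 + S_t + ∑ r, c_r (μ r - r)`, where `S_t` is the net number of `±1` steps and `c_r` the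
net number of crossings of the edge `{r, μ r}`, one representative `r` being chosen for each of the
`k` edges. The variance of `S_t` is at most `t` (`walkOp_pow_sq`). Under the stationary (uniform)
start, the second moment of `c_r` up to time `t ≤ τ` is at most `150 τ / n` (`sum_crossing_sq_le`).
By Chebyshev's inequality some starting point has its time-`t` law giving mass at least `1/2` to a
set of size of order `√τ (√(τ / n)) ^ k` (`exists_confined`). For `τ = δ² n ^ ((k + 2) / (k + 1))`
with `δ` small this is at most `n / 4`, so the chain is not mixed.

The second-moment bound for `c_r` is a martingale argument. Let `f` be `1` at `r`, `-1` at `μ r` and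
`0` elsewhere, and let `g` solve `g - (1 - 1/τ) P g = a f`. Then `c_r + g(X)` is a martingale up to
the drift `(1/τ) P g`, so it suffices to bound `∑ g²` by `O(τ)` and the Dirichlet form of `g` by
`O(1)`. Pairing the equation with `g` bounds the Dirichlet form by a multiple of
`a (g r - g (μ r))`, while the edge `{r, μ r}` alone makes it at least `a (g r - g (μ r))²`; so
`g r - g (μ r)` is bounded and both estimates follow (`resolvent_bounds`).
-/

open scoped BigOperators

noncomputable section

attribute [local instance 10] Classical.propDecidable

/-- Transition matrix of the perturbed cycle chain: forward probability `p`, backward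
probability `q`, probability `a` of using the added matching edge at a hub, remaining
mass on the diagonal. -/
def cycleP (n : ℕ) [NeZero n] (p q a : ℝ) (H : Finset (ZMod n)) (μ : ZMod n → ZMod n) :
    Matrix (ZMod n) (ZMod n) ℝ := fun x y =>
  (if y = x + 1 then p else 0) + (if y = x - 1 then q else 0) +
    (if x ∈ H ∧ y = μ x then a else 0) +
    (if y = x then 1 - p - q - (if x ∈ H then a else 0) else 0)

/-- `H` is a set of `2k` hubs and `μ` a fixed-point-free involution (perfect matching)
of `H`, extended by the identity outside `H`. -/
def IsConfig (n : ℕ) [NeZero n] (k : ℕ) (H : Finset (ZMod n)) (μ : ZMod n → ZMod n) : Prop :=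
  H.card = 2 * k ∧ (∀ x ∈ H, μ x ∈ H) ∧ (∀ x, μ (μ x) = x) ∧
    (∀ x ∈ H, μ x ≠ x) ∧ (∀ x, x ∉ H → μ x = x)

/-- Probability, under the uniform choice of the hub set together with a uniform perfect
matching on it, of the event `E`. -/
def configProb (n : ℕ) [NeZero n] (k : ℕ)
    (E : Finset (ZMod n) → (ZMod n → ZMod n) → Prop) : ℝ :=
  ((Finset.univ.filter (fun cfg : Finset (ZMod n) × (ZMod n → ZMod n) =>
      IsConfig n k cfg.1 cfg.2 ∧ E cfg.1 cfg.2)).card : ℝ) /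
    ((Finset.univ.filter (fun cfg : Finset (ZMod n) × (ZMod n → ZMod n) =>
      IsConfig n k cfg.1 cfg.2)).card : ℝ)

/-- The chain driven by `P` is mixed to total-variation tolerance `ε` at time `t`
(from every starting state), the stationary distribution being uniform. -/
def mixedBy (n : ℕ) [NeZero n] (P : Matrix (ZMod n) (ZMod n) ℝ) (ε : ℝ) (t : ℕ) : Prop :=
  ∀ x : ZMod n, (1 / 2 : ℝ) * ∑ y : ZMod n, |(P ^ t) x y - 1 / n| ≤ ε

/-! ### The walk with its history -/

/-- One-step averaging operator of the walk, acting on functions of the position: with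
probabilities `p`, `q`, `a`, `1 - p - q - a` the position `x` moves to `x + 1`, `x - 1`, `μ x`, `x`.
Since `μ` is the identity off the hubs, this is the action of `cycleP`
(see `mulVec_cycleP`). -/
def avg {n : ℕ} (p q a : ℝ) (μ : ZMod n → ZMod n) (g : ZMod n → ℝ) (x : ZMod n) : ℝ :=
  p * g (x + 1) + q * g (x - 1) + a * g (μ x) + (1 - p - q - a) * g x

/-- The signed indicator of a directed edge: `1` at `r`, `-1` at `μ r`, `0` elsewhere. -/
def edgeSign {n : ℕ} (μ : ZMod n → ZMod n) (r x : ZMod n) : ℤ :=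
  (if x = r then 1 else 0) - (if x = μ r then 1 else 0)

/-- States of the walk together with its history: the position, the net number of `±1` steps, and
for each `r` the net number `c r` of crossings of the edge from `r` to `μ r`. -/
abbrev WState (n : ℕ) : Type := ZMod n × ℤ × (ZMod n → ℤ)

/-- Effect of one use of the matching on the extended state. -/
def jumpStep {n : ℕ} (μ : ZMod n → ZMod n) (z : WState n) : WState n :=
  (μ z.1, z.2.1, fun r => z.2.2 r + edgeSign μ r z.1)

/-- One-step averaging operator of the extended chain, so that `(walkOp p q a μ ^ t) Φ z` is the
expectation of `Φ` at time `t` for the chain started at `z`. -/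
def walkOp {n : ℕ} (p q a : ℝ) (μ : ZMod n → ZMod n) :
    (WState n → ℝ) →ₗ[ℝ] (WState n → ℝ) where
  toFun Φ z := p * Φ (z.1 + 1, z.2.1 + 1, z.2.2) + q * Φ (z.1 - 1, z.2.1 - 1, z.2.2)
    + a * Φ (jumpStep μ z) + (1 - p - q - a) * Φ z
  map_add' Φ Ψ := by
    ext z
    simp only [Pi.add_apply]
    ring
  map_smul' c Φ := by
    ext z
    simp only [Pi.smul_apply, smul_eq_mul, RingHom.id_apply]
    ring

lemma walkOp_apply {n : ℕ} (p q a : ℝ) (μ : ZMod n → ZMod n) (Φ : WState n → ℝ) (z : WState n) :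
    walkOp p q a μ Φ z =
      p * Φ (z.1 + 1, z.2.1 + 1, z.2.2) + q * Φ (z.1 - 1, z.2.1 - 1, z.2.2)
        + a * Φ (jumpStep μ z) + (1 - p - q - a) * Φ z := rfl

/-! ### The averaging operators -/

lemma mulVec_cycleP {n : ℕ} [NeZero n] (p q a : ℝ) (H : Finset (ZMod n)) (μ : ZMod n → ZMod n)
    (hμ : ∀ x, x ∉ H → μ x = x) (g : ZMod n → ℝ) :
    (cycleP n p q a H μ).mulVec g = avg p q a μ g := by
  ext x
  simp only [Matrix.mulVec, dotProduct, cycleP, avg, add_mul, Finset.sum_add_distrib, ite_mul,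
    zero_mul, Finset.sum_ite_eq', Finset.mem_univ, if_true]
  by_cases hx : x ∈ H
  · simp [hx]
  · simp [hx, hμ x hx]
    ring

lemma walkOp_fst {n : ℕ} (p q a : ℝ) (μ : ZMod n → ZMod n) (g : ZMod n → ℝ) :
    walkOp p q a μ (fun z => g z.1) = fun z => avg p q a μ g z.1 := by
  ext z
  simp [walkOp_apply, avg, jumpStep]

lemma walkOp_pow_fst {n : ℕ} (p q a : ℝ) (μ : ZMod n → ZMod n) (t : ℕ) (g : ZMod n → ℝ) :
    (walkOp p q a μ ^ t) (fun z => g z.1) = fun z => ((avg p q a μ)^[t] g) z.1 := by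
  induction t generalizing g with
  | zero => rfl
  | succ t ih =>
    rw [pow_succ, Module.End.mul_apply, walkOp_fst, ih, Function.iterate_succ_apply]

lemma mulVec_cycleP_pow {n : ℕ} [NeZero n] (p q a : ℝ) (H : Finset (ZMod n))
    (μ : ZMod n → ZMod n) (hμ : ∀ x, x ∉ H → μ x = x) (t : ℕ) (g : ZMod n → ℝ) :
    (cycleP n p q a H μ ^ t).mulVec g = (avg p q a μ)^[t] g := by
  induction t generalizing g with
  | zero => simp
  | succ t ih =>
    rw [pow_succ, ← Matrix.mulVec_mulVec, mulVec_cycleP p q a H μ hμ, ih,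
      Function.iterate_succ_apply]

/-- Positivity of the extended chain, relative to a set `I` of states closed under its moves. -/
lemma walkOp_pow_mono {n : ℕ} {p q a : ℝ} (hp : 0 < p) (hq : 0 < q) (ha : 0 < a)
    (hpqa : p + q + a ≤ 1) (μ : ZMod n → ZMod n) (I : WState n → Prop)
    (h1 : ∀ z, I z → I (z.1 + 1, z.2.1 + 1, z.2.2))
    (h2 : ∀ z, I z → I (z.1 - 1, z.2.1 - 1, z.2.2))
    (h3 : ∀ z, I z → I (jumpStep μ z))
    (t : ℕ) (Φ Ψ : WState n → ℝ) (h : ∀ z, I z → Φ z ≤ Ψ z) (z : WState n) (hz : I z) :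
    (walkOp p q a μ ^ t) Φ z ≤ (walkOp p q a μ ^ t) Ψ z := by
  induction t generalizing Φ Ψ with
  | zero => exact h z hz
  | succ t ih =>
    rw [pow_succ, Module.End.mul_apply, Module.End.mul_apply]
    refine ih _ _ fun z hz => ?_
    rw [walkOp_apply, walkOp_apply]
    have hr : 0 ≤ 1 - p - q - a := by linarith
    gcongr
    · exact h _ (h1 z hz)
    · exact h _ (h2 z hz)
    · exact h _ (h3 z hz)
    · exact h z hz

lemma walkOp_pow_le {n : ℕ} {p q a : ℝ} (hp : 0 < p) (hq : 0 < q) (ha : 0 < a)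
    (hpqa : p + q + a ≤ 1) (μ : ZMod n → ZMod n) (t : ℕ) (Φ Ψ : WState n → ℝ)
    (h : ∀ z, Φ z ≤ Ψ z) (z : WState n) :
    (walkOp p q a μ ^ t) Φ z ≤ (walkOp p q a μ ^ t) Ψ z :=
  walkOp_pow_mono hp hq ha hpqa μ (fun _ => True) (by simp) (by simp) (by simp) t Φ Ψ
    (fun z _ => h z) z trivial

/-- The `±1` steps are i.i.d. with mean `p - q` and variance `p + q - (p - q) ^ 2`. -/
lemma walkOp_pow_sq {n : ℕ} (p q a : ℝ) (μ : ZMod n → ZMod n) (t : ℕ) (b : ℝ) (z : WState n) :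
    (walkOp p q a μ ^ t) (fun z => ((z.2.1 : ℝ) - b) ^ 2) z =
      ((z.2.1 : ℝ) + (p - q) * t - b) ^ 2 + t * (p + q - (p - q) ^ 2) := by
  induction t generalizing z with
  | zero => simp
  | succ t ih =>
    rw [pow_succ', Module.End.mul_apply, walkOp_apply, ih, ih, ih, ih]
    simp only [jumpStep]
    push_cast
    ring

lemma avg_sq_le {n : ℕ} {p q a : ℝ} {μ : ZMod n → ZMod n} (hp : 0 < p)
    (hq : 0 < q) (ha : 0 < a) (hpqa : p + q + a ≤ 1) (g : ZMod n → ℝ) (x : ZMod n) :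
    (avg p q a μ g x) ^ 2 ≤ avg p q a μ (fun y => g y ^ 2) x := by
  have hr : 0 ≤ 1 - p - q - a := by linarith
  -- the difference is the variance of `g` after one step from `x`
  have key : avg p q a μ (fun y => g y ^ 2) x - (avg p q a μ g x) ^ 2 =
      p * (g (x + 1) - avg p q a μ g x) ^ 2 + q * (g (x - 1) - avg p q a μ g x) ^ 2
      + a * (g (μ x) - avg p q a μ g x) ^ 2
      + (1 - p - q - a) * (g x - avg p q a μ g x) ^ 2 := by
    simp only [avg]
    ring
  have : 0 ≤ avg p q a μ (fun y => g y ^ 2) x - (avg p q a μ g x) ^ 2 := by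
    rw [key]
    positivity
  linarith

/-! ### The resolvent bound -/

section Resolvent

variable {n : ℕ} [NeZero n] {p q a : ℝ} {μ : ZMod n → ZMod n}

lemma sum_comp_add_one (g : ZMod n → ℝ) : ∑ x, g (x + 1) = ∑ x, g x :=
  Equiv.sum_comp (Equiv.addRight (1 : ZMod n)) g

lemma sum_comp_sub_one (g : ZMod n → ℝ) : ∑ x, g (x - 1) = ∑ x, g x :=
  Equiv.sum_comp (Equiv.subRight (1 : ZMod n)) g

lemma sum_comp_matching (hμ : ∀ x, μ (μ x) = x) (g : ZMod n → ℝ) :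
    ∑ x, g (μ x) = ∑ x, g x :=
  Equiv.sum_comp (Function.Involutive.toPerm μ hμ) g

/-- The counting measure is stationary. -/
lemma sum_avg (hμ : ∀ x, μ (μ x) = x) (g : ZMod n → ℝ) :
    ∑ x, avg p q a μ g x = ∑ x, g x := by
  simp only [avg, Finset.sum_add_distrib, ← Finset.mul_sum]
  rw [sum_comp_add_one, sum_comp_sub_one, sum_comp_matching hμ]
  ring

lemma sum_avg_iterate (hμ : ∀ x, μ (μ x) = x) (t : ℕ) (g : ZMod n → ℝ) :
    ∑ x, ((avg p q a μ)^[t] g) x = ∑ x, g x := by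
  induction t generalizing g with
  | zero => rfl
  | succ t ih => rw [Function.iterate_succ_apply, ih, sum_avg hμ]

lemma sum_avg_sq_le (hp : 0 < p) (hq : 0 < q) (ha : 0 < a) (hpqa : p + q + a ≤ 1)
    (hμ : ∀ x, μ (μ x) = x) (g : ZMod n → ℝ) :
    ∑ x, (avg p q a μ g x) ^ 2 ≤ ∑ x, g x ^ 2 :=
  (Finset.sum_le_sum fun x _ => avg_sq_le hp hq ha hpqa g x).trans_eq (sum_avg hμ _)

/-- Mean square increment of `g` over one step from `x`. -/
def gradSq (p q a : ℝ) (μ : ZMod n → ZMod n) (g : ZMod n → ℝ) (x : ZMod n) : ℝ :=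
  p * (g (x + 1) - g x) ^ 2 + q * (g (x - 1) - g x) ^ 2 + a * (g (μ x) - g x) ^ 2

/-- The Dirichlet form identity for a stationary, not necessarily reversible, chain. -/
lemma sum_gradSq (hμ : ∀ x, μ (μ x) = x) (g : ZMod n → ℝ) :
    ∑ x, gradSq p q a μ g x = 2 * ∑ x, g x * (g x - avg p q a μ g x) := by
  have key : ∀ x, gradSq p q a μ g x = 2 * (g x * (g x - avg p q a μ g x)) +
      (p * (g (x + 1) ^ 2) + q * (g (x - 1) ^ 2) + a * (g (μ x) ^ 2)
        - (p + q + a) * g x ^ 2) := by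
    intro x
    simp only [gradSq, avg]
    ring
  simp only [key, Finset.sum_add_distrib, Finset.sum_sub_distrib, ← Finset.mul_sum]
  rw [sum_comp_add_one (fun x => g x ^ 2), sum_comp_sub_one (fun x => g x ^ 2),
    sum_comp_matching hμ (fun x => g x ^ 2)]
  ring

lemma exists_resolvent (hp : 0 < p) (hq : 0 < q) (ha : 0 < a) (hpqa : p + q + a ≤ 1)
    (hμ : ∀ x, μ (μ x) = x) {l : ℝ} (hl0 : 0 ≤ l) (hl : l < 1) (f : ZMod n → ℝ) :
    ∃ g : ZMod n → ℝ, ∀ x, g x - l * avg p q a μ g x = f x := by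
  let S : (ZMod n → ℝ) →ₗ[ℝ] (ZMod n → ℝ) :=
    { toFun := fun g x => g x - l * avg p q a μ g x
      map_add' := by
        intro g h
        ext x
        simp only [avg, Pi.add_apply]
        ring
      map_smul' := by
        intro c g
        ext x
        simp only [avg, Pi.smul_apply, smul_eq_mul, RingHom.id_apply]
        ring }
  have hinj : Function.Injective S := by
    rw [← LinearMap.ker_eq_bot, LinearMap.ker_eq_bot']
    intro g hg
    have h1 : ∀ x, g x = l * avg p q a μ g x := fun x => by
      have := congrFun hg x
      simp only [S, LinearMap.coe_mk, AddHom.coe_mk, Pi.zero_apply] at this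
      linarith
    have h2 : ∑ x, g x ^ 2 = l ^ 2 * ∑ x, (avg p q a μ g x) ^ 2 := by
      rw [Finset.mul_sum]
      refine Finset.sum_congr rfl fun x _ => ?_
      conv_lhs => rw [h1 x]
      ring
    have h3 := sum_avg_sq_le hp hq ha hpqa hμ g
    have h4 : (0 : ℝ) ≤ ∑ x, g x ^ 2 := Finset.sum_nonneg fun x _ => sq_nonneg _
    have h6 : l ^ 2 < 1 := by nlinarith
    have h5 : ∑ x, g x ^ 2 = 0 := by nlinarith [sq_nonneg l]
    rw [Finset.sum_eq_zero_iff_of_nonneg (fun x _ => sq_nonneg _)] at h5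
    ext x
    simpa using h5 x (Finset.mem_univ x)
  obtain ⟨g, hg⟩ := LinearMap.injective_iff_surjective.mp hinj f
  exact ⟨g, fun x => congrFun hg x⟩

lemma sum_mul_edgeSign (r : ZMod n) (g : ZMod n → ℝ) :
    ∑ x, g x * (edgeSign μ r x : ℝ) = g r - g (μ r) := by
  simp only [edgeSign]
  push_cast
  simp [mul_sub, Finset.sum_sub_distrib]

lemma sum_edgeSign_sq {r : ZMod n} (hr : μ r ≠ r) :
    ∑ x, ((edgeSign μ r x : ℤ) : ℝ) ^ 2 = 2 := by
  have := sum_mul_edgeSign (μ := μ) r (fun x => ((edgeSign μ r x : ℤ) : ℝ))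
  simp only [pow_two]
  rw [this]
  simp [edgeSign, hr, hr.symm]
  norm_num

/-- Bounds on the resolvent `g = (1 - l P)⁻¹ (a f)` of the signed edge indicator `f`, where
`l = 1 - 1 / τ`. The Dirichlet form of `g` is controlled by `a * (g r - g (μ r))` and, through the
edge from `r` to `μ r` alone, is at least `a * (g r - g (μ r)) ^ 2`. This bounds the Dirichlet form
by a constant and `∑ g ^ 2` by a multiple of `τ`, whatever the positions of the hubs. -/
lemma resolvent_bounds (hp : 0 < p) (hq : 0 < q) (ha : 0 < a) (hpqa : p + q + a ≤ 1)
    (hμ : ∀ x, μ (μ x) = x) {r : ZMod n} (hr : μ r ≠ r) {τ : ℝ} (hτ : 2 ≤ τ)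
    (g : ZMod n → ℝ)
    (hg : ∀ x, g x - (1 - 1 / τ) * avg p q a μ g x = a * (edgeSign μ r x : ℝ)) :
    ∑ x, g x ^ 2 ≤ 2 * τ ∧ ∑ x, gradSq p q a μ g x ≤ 8 := by
  set d := g r - g (μ r) with hd
  have hτ0 : 0 < τ := by linarith
  have hi : 1 / τ ≤ 1 / 2 := one_div_le_one_div_of_le (by norm_num) hτ
  have hi0 : 0 < 1 / τ := by positivity
  set i := 1 / τ with hidef
  set G := ∑ x, g x ^ 2 with hG
  set D := ∑ x, gradSq p q a μ g x with hD
  have hG0 : 0 ≤ G := Finset.sum_nonneg fun x _ => sq_nonneg _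
  have e1 : (1 - i) * D / 2 + i * G = a * d := by
    rw [hD, sum_gradSq hμ, hd, ← sum_mul_edgeSign, hG, Finset.mul_sum, Finset.mul_sum,
      Finset.mul_sum, Finset.sum_div, Finset.mul_sum, ← Finset.sum_add_distrib]
    refine Finset.sum_congr rfl fun x _ => ?_
    rw [show a * (g x * (edgeSign μ r x : ℝ)) = g x * (a * (edgeSign μ r x : ℝ)) by ring,
      ← hg x]
    ring
  have e2 : 2 * (a * d ^ 2) ≤ D := by
    have hnn : ∀ x, 0 ≤ gradSq p q a μ g x := fun x => by
      unfold gradSq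
      positivity
    have h1 : ∑ x ∈ ({r, μ r} : Finset (ZMod n)), gradSq p q a μ g x ≤ D :=
      Finset.sum_le_univ_sum_of_nonneg hnn
    rw [Finset.sum_pair hr.symm] at h1
    have h2 : a * d ^ 2 ≤ gradSq p q a μ g r := by
      unfold gradSq
      have : 0 ≤ p * (g (r + 1) - g r) ^ 2 + q * (g (r - 1) - g r) ^ 2 := by positivity
      have e : (g (μ r) - g r) ^ 2 = d ^ 2 := by rw [hd]; ring
      rw [e]
      linarith
    have h3 : a * d ^ 2 ≤ gradSq p q a μ g (μ r) := by
      unfold gradSq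
      have : 0 ≤ p * (g (μ r + 1) - g (μ r)) ^ 2 + q * (g (μ r - 1) - g (μ r)) ^ 2 := by
        positivity
      rw [hμ r]
      linarith
    linarith
  have hiG : 0 ≤ i * G := by positivity
  have hD0 : 0 ≤ D := le_trans (by positivity) e2
  have hd2 : d ≤ 2 := by
    have h1 : (1 - i) * (a * d ^ 2) ≤ a * d := by nlinarith
    have h2 : a * d ^ 2 ≤ 2 * (a * d) := by nlinarith [mul_nonneg ha.le (sq_nonneg d)]
    have h3 : d ^ 2 ≤ 2 * d := by
      have : a * d ^ 2 ≤ a * (2 * d) := by linarith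
      exact le_of_mul_le_mul_left this ha
    nlinarith
  have had : a * d ≤ 2 := by nlinarith
  constructor
  · have h1 : i * G ≤ 2 := by nlinarith
    have h2 : τ * (i * G) = G := by rw [hidef]; field_simp
    nlinarith
  · nlinarith

/-- The net number of crossings of a fixed matching edge up to time `t ≤ τ` has second moment
`O(τ / n)` under the stationary start; the sum over starting points below carries the factor `n`. -/
lemma sum_crossing_sq_le (hp : 0 < p) (hq : 0 < q) (ha : 0 < a) (hpqa : p + q + a ≤ 1)
    (hμ : ∀ x, μ (μ x) = x) {r : ZMod n} (hr : μ r ≠ r) {τ : ℝ} (hτ : 2 ≤ τ)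
    (t : ℕ) (ht : (t : ℝ) ≤ τ) :
    ∑ x : ZMod n, (walkOp p q a μ ^ t) (fun z => ((z.2.2 r : ℤ) : ℝ) ^ 2) (x, 0, 0)
      ≤ 150 * τ := by
  have hτ0 : 0 < τ := by linarith
  have hi0 : 0 < 1 / τ := by positivity
  have hi : 1 / τ ≤ 1 / 2 := one_div_le_one_div_of_le (by norm_num) hτ
  obtain ⟨g, hg⟩ := exists_resolvent hp hq ha hpqa hμ (l := 1 - 1 / τ) (by linarith)
    (by linarith) (fun x => a * (edgeSign μ r x : ℝ))
  obtain ⟨hG, hD⟩ := resolvent_bounds hp hq ha hpqa hμ hr hτ g hg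
  -- `c r + g` is a martingale up to the drift `(1 / τ) * avg g`
  let Ψ : WState n → ℝ := fun z => ((z.2.2 r : ℝ) + g z.1) ^ 2
  let η : ZMod n → ℝ := fun x =>
    1 / τ * (avg p q a μ g x) ^ 2 + (2 * gradSq p q a μ g x + 2 * (edgeSign μ r x : ℝ) ^ 2)
  have hη : ∑ x, η x ≤ 22 := by
    simp only [η, Finset.sum_add_distrib, ← Finset.mul_sum]
    rw [sum_edgeSign_sq hr]
    have h1 : ∑ x, (avg p q a μ g x) ^ 2 ≤ 2 * τ :=
      (sum_avg_sq_le hp hq ha hpqa hμ g).trans hG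
    have h2 : 1 / τ * ∑ x, (avg p q a μ g x) ^ 2 ≤ 1 / τ * (2 * τ) := by gcongr
    have h3 : 1 / τ * (2 * τ) = 2 := by field_simp
    linarith
  have hstep : ∀ z, walkOp p q a μ Ψ z ≤ ((1 + 1 / τ) • Ψ + fun z : WState n => η z.1) z := by
    intro z
    obtain ⟨x, s, c⟩ := z
    have hgx := hg x
    simp only [walkOp_apply, Ψ, η, jumpStep, Pi.add_apply, Pi.smul_apply, smul_eq_mul]
    push_cast
    generalize hu : (c r : ℝ) + g x = u
    generalize hf : (edgeSign μ r x : ℝ) = f at hgx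
    have e1 : p * ((c r : ℝ) + g (x + 1)) ^ 2 + q * ((c r : ℝ) + g (x - 1)) ^ 2
        + a * ((c r : ℝ) + f + g (μ x)) ^ 2 + (1 - p - q - a) * u ^ 2 =
        u ^ 2 + 2 * u * (1 / τ * avg p q a μ g x) +
        (p * (g (x + 1) - g x) ^ 2 + q * (g (x - 1) - g x) ^ 2
          + a * (f + (g (μ x) - g x)) ^ 2) := by
      have : 1 / τ * avg p q a μ g x = a * f + avg p q a μ g x - g x := by linarith
      rw [this, ← hu]
      simp only [avg]
      ring
    rw [e1]
    have e2 : p * (g (x + 1) - g x) ^ 2 + q * (g (x - 1) - g x) ^ 2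
          + a * (f + (g (μ x) - g x)) ^ 2 ≤ 2 * gradSq p q a μ g x + 2 * f ^ 2 := by
      have h1 : 0 ≤ p * (g (x + 1) - g x) ^ 2 := by positivity
      have h2 : 0 ≤ q * (g (x - 1) - g x) ^ 2 := by positivity
      have h3 : 0 ≤ a * (f - (g (μ x) - g x)) ^ 2 := by positivity
      have h4 : 0 ≤ (1 - a) * f ^ 2 := mul_nonneg (by linarith) (sq_nonneg _)
      unfold gradSq
      nlinarith
    have e3 : 0 ≤ 1 / τ * (u - avg p q a μ g x) ^ 2 := by positivity
    nlinarith
  have hrec : ∀ m : ℕ, ∑ x : ZMod n, (walkOp p q a μ ^ m) Ψ (x, 0, 0) ≤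
      (1 + 1 / τ) ^ m * (2 * τ + m * 22) := by
    intro m
    induction m with
    | zero => simpa [Ψ] using hG
    | succ m ih =>
      have h1 : ∀ x : ZMod n, (walkOp p q a μ ^ (m + 1)) Ψ (x, 0, 0) ≤
          (1 + 1 / τ) * (walkOp p q a μ ^ m) Ψ (x, 0, 0) + ((avg p q a μ)^[m] η) x := by
        intro x
        rw [pow_succ, Module.End.mul_apply]
        refine (walkOp_pow_le hp hq ha hpqa μ m _ _ hstep _).trans_eq ?_
        rw [map_add, map_smul, walkOp_pow_fst]
        rfl
      refine (Finset.sum_le_sum fun x _ => h1 x).trans ?_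
      rw [Finset.sum_add_distrib, ← Finset.mul_sum, sum_avg_iterate hμ]
      have h2 : (1 : ℝ) ≤ (1 + 1 / τ) ^ (m + 1) := one_le_pow₀ (by linarith)
      have h3 := mul_le_mul_of_nonneg_left ih (by linarith : 0 ≤ 1 + 1 / τ)
      push_cast
      rw [pow_succ'] at h2 ⊢
      nlinarith
  have hexp : (1 + 1 / τ) ^ t ≤ 3 := by
    calc (1 + 1 / τ) ^ t ≤ (Real.exp (1 / τ)) ^ t := by
          gcongr
          linarith [Real.add_one_le_exp (1 / τ)]
      _ = Real.exp (t * (1 / τ)) := (Real.exp_nat_mul _ _).symm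
      _ ≤ Real.exp 1 := by
          gcongr
          rw [mul_one_div, div_le_one hτ0]
          exact ht
      _ ≤ 3 := by linarith [Real.exp_one_lt_d9]
  have hΨ : ∑ x : ZMod n, (walkOp p q a μ ^ t) Ψ (x, 0, 0) ≤ 72 * τ := by
    refine (hrec t).trans ?_
    have : (2 * τ + t * 22 : ℝ) ≤ 24 * τ := by linarith
    calc (1 + 1 / τ) ^ t * (2 * τ + t * 22) ≤ 3 * (24 * τ) := by gcongr
      _ = 72 * τ := by ring
  have hfin : ∀ x : ZMod n, (walkOp p q a μ ^ t) (fun z => ((z.2.2 r : ℤ) : ℝ) ^ 2) (x, 0, 0) ≤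
      2 * (walkOp p q a μ ^ t) Ψ (x, 0, 0)
        + 2 * ((avg p q a μ)^[t] (fun y => g y ^ 2)) x := by
    intro x
    refine (walkOp_pow_le hp hq ha hpqa μ t _
      ((2 : ℝ) • Ψ + (2 : ℝ) • (fun z : WState n => g z.1 ^ 2)) ?_ _).trans_eq ?_
    · intro z
      simp only [Ψ, Pi.add_apply, Pi.smul_apply, smul_eq_mul]
      nlinarith [sq_nonneg ((z.2.2 r : ℝ) + 2 * g z.1)]
    · rw [map_add, map_smul, map_smul, walkOp_pow_fst p q a μ t (fun y => g y ^ 2)]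
      rfl
  refine (Finset.sum_le_sum fun x _ => hfin x).trans ?_
  rw [Finset.sum_add_distrib, ← Finset.mul_sum, ← Finset.mul_sum, sum_avg_iterate hμ]
  linarith

end Resolvent

/-! ### Confinement of the walk to a small set -/

/-- One representative from each matched pair of hubs. -/
def reps {n : ℕ} (H : Finset (ZMod n)) (μ : ZMod n → ZMod n) : Finset (ZMod n) :=
  H.filter fun x => x.val < (μ x).val

section Confine

variable {n : ℕ} [NeZero n] {k : ℕ} {H : Finset (ZMod n)} {μ : ZMod n → ZMod n}

lemma card_reps (h : IsConfig n k H μ) : (reps H μ).card = k := by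
  obtain ⟨hc, hH, hinv, hne, hid⟩ := h
  have hinj : Function.Injective μ := (show Function.Involutive μ from hinv).injective
  have h1 : H.filter (fun x => ¬ x.val < (μ x).val) = (reps H μ).image μ := by
    ext x
    simp only [reps, Finset.mem_filter, Finset.mem_image]
    constructor
    · rintro ⟨hx, hlt⟩
      refine ⟨μ x, ⟨hH x hx, ?_⟩, hinv x⟩
      rw [hinv]
      exact lt_of_le_of_ne (not_lt.mp hlt) fun he => hne x hx (ZMod.val_injective n he)
    · rintro ⟨y, ⟨hy, hlt⟩, rfl⟩
      refine ⟨hH y hy, ?_⟩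
      rw [hinv]
      exact not_lt.mpr hlt.le
  have h2 := Finset.card_filter_add_card_filter_not (s := H) (fun x => x.val < (μ x).val)
  rw [h1, Finset.card_image_of_injective _ hinj] at h2
  change (reps H μ).card + (reps H μ).card = H.card at h2
  omega

/-- A use of the matching displaces the walk by the sum of the recorded crossings. -/
lemma sum_edgeSign_mul (h : IsConfig n k H μ) (x : ZMod n) :
    ∑ r ∈ reps H μ, ((edgeSign μ r x : ℤ) : ZMod n) * (μ r - r) = μ x - x := by
  obtain ⟨hc, hH, hinv, hne, hid⟩ := h
  have key : ∀ r, ((edgeSign μ r x : ℤ) : ZMod n) * (μ r - r) =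
      (if x = r then μ x - x else 0) + (if μ x = r then μ x - x else 0) := by
    intro r
    have e : (x = μ r) ↔ (μ x = r) :=
      ⟨fun h => by rw [h, hinv], fun h => by rw [← h, hinv]⟩
    unfold edgeSign
    by_cases h1 : x = r <;> by_cases h2 : μ x = r
    · subst h1
      simp [h2]
    · subst h1
      simp [e, h2]
    · have h3 := e.mpr h2
      subst h2
      simp [h1, hinv]
    · simp [e, h1, h2]
  simp only [key, Finset.sum_add_distrib, Finset.sum_ite_eq]
  by_cases hx : x ∈ H
  · have hμx := hH x hx
    simp only [reps, Finset.mem_filter, hx, hμx, true_and, hinv]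
    rcases lt_trichotomy x.val (μ x).val with h | h | h
    · simp [h, h.le]
    · exact absurd (ZMod.val_injective n h).symm (hne x hx)
    · simp [h, h.le]
  · simp [hid x hx]

/-- The positions reached from `x` by at most `L` net crossings of each matching edge and a net
number `j ∈ J` of `±1` steps. -/
def confined (H : Finset (ZMod n)) (μ : ZMod n → ZMod n) (J : Finset ℤ) (L : ℕ) (x : ZMod n) :
    Finset (ZMod n) :=
  (J ×ˢ Fintype.piFinset fun r : ZMod n =>
    if r ∈ reps H μ then Finset.Icc (-(L : ℤ)) L else {0}).image
    fun w => x + (w.1 : ZMod n) + ∑ r ∈ reps H μ, ((w.2 r : ℤ) : ZMod n) * (μ r - r)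

lemma card_confined_le (h : IsConfig n k H μ) (J : Finset ℤ) (L : ℕ) (x : ZMod n) :
    (confined H μ J L x).card ≤ J.card * (2 * L + 1) ^ k := by
  refine Finset.card_image_le.trans ?_
  rw [Finset.card_product, Fintype.card_piFinset]
  refine Nat.mul_le_mul_left _ (le_of_eq ?_)
  have : ∀ r : ZMod n, (if r ∈ reps H μ then Finset.Icc (-(L : ℤ)) L else {0}).card =
      if r ∈ reps H μ then 2 * L + 1 else 1 := by
    intro r
    split_ifs
    · rw [Int.card_Icc]
      omega
    · simp
  simp only [this]
  rw [Finset.prod_ite_mem, Finset.univ_inter, Finset.prod_const, card_reps h]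

lemma mem_confined {J : Finset ℤ} {L : ℕ} {x : ZMod n} {j : ℤ} {c : ZMod n → ℤ} (hj : j ∈ J)
    (hc : ∀ r ∈ reps H μ, |c r| ≤ L) :
    x + (j : ZMod n) + ∑ r ∈ reps H μ, ((c r : ℤ) : ZMod n) * (μ r - r) ∈ confined H μ J L x := by
  unfold confined
  rw [Finset.mem_image]
  refine ⟨(j, fun r => if r ∈ reps H μ then c r else 0), ?_, ?_⟩
  · rw [Finset.mem_product]
    refine ⟨hj, ?_⟩
    rw [Fintype.mem_piFinset]
    intro r
    by_cases hr : r ∈ reps H μ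
    · simpa [hr] using abs_le.mp (hc r hr)
    · simp [hr]
  · congr 1
    refine Finset.sum_congr rfl fun r hr => ?_
    simp [hr]

/-- From some starting point the walk is, at time `t`, with probability at least `1/2` in a set of
size at most `(2K + 1)(2L + 1)^k`. -/
lemma exists_confined {p q a : ℝ} (hp : 0 < p) (hq : 0 < q) (ha : 0 < a) (hpqa : p + q + a ≤ 1)
    (h : IsConfig n k H μ) {τ K L : ℝ} (hτ : 2 ≤ τ) (hK : 0 < K) (hL : 0 < L)
    (hKτ : 4 * τ ≤ K ^ 2) (hLτ : 600 * k * τ ≤ n * L ^ 2) (t : ℕ) (ht : (t : ℝ) ≤ τ) :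
    ∃ (x : ZMod n) (B : Finset (ZMod n)), (B.card : ℝ) ≤ (2 * K + 1) * (2 * L + 1) ^ k ∧
      1 / 2 ≤ ∑ y ∈ B, (cycleP n p q a H μ ^ t) x y := by
  set b : ℝ := (p - q) * t with hb
  set J : Finset ℤ := Finset.Icc ⌈b - K⌉ ⌊b + K⌋ with hJ
  set M : ℕ := ⌊L⌋₊ with hM
  have hinv : ∀ x, μ (μ x) = x := h.2.2.1
  have hn : (0 : ℝ) < n := by exact_mod_cast Nat.pos_of_ne_zero (NeZero.ne n)
  have hJc : (J.card : ℝ) ≤ 2 * K + 1 := by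
    rw [hJ, Int.card_Icc]
    have h1 : (⌊b + K⌋ : ℝ) ≤ b + K := Int.floor_le _
    have h2 : b - K ≤ (⌈b - K⌉ : ℝ) := Int.le_ceil _
    have h3 : (((⌊b + K⌋ + 1 - ⌈b - K⌉).toNat : ℤ) : ℝ) ≤ 2 * K + 1 := by
      rw [Int.toNat_eq_max]
      push_cast
      refine max_le ?_ (by linarith)
      linarith
    exact_mod_cast h3
  have hcard : ∀ x, ((confined H μ J M x).card : ℝ) ≤ (2 * K + 1) * (2 * L + 1) ^ k := by
    intro x
    have h1 : ((confined H μ J M x).card : ℝ) ≤ J.card * (2 * (M : ℝ) + 1) ^ k := by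
      exact_mod_cast card_confined_le h J M x
    have h2 : (M : ℝ) ≤ L := Nat.floor_le hL.le
    refine h1.trans ?_
    gcongr
  -- Chebyshev's inequality for the step count and for every crossing count
  have hcheb : ∀ x : ZMod n, 1 ≤ ∑ y ∈ confined H μ J M x, (cycleP n p q a H μ ^ t) x y
      + 1 / 4 + ∑ r ∈ reps H μ,
        (L ^ 2)⁻¹ * (walkOp p q a μ ^ t) (fun z => ((z.2.2 r : ℤ) : ℝ) ^ 2) (x, 0, 0) := by
    intro x
    set B := confined H μ J M x with hB
    let ind : ZMod n → ℝ := fun y => if y ∈ B then 1 else 0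
    let Q : WState n → ℝ := (fun z : WState n => ind z.1) +
      (K ^ 2)⁻¹ • (fun z : WState n => ((z.2.1 : ℝ) - b) ^ 2) +
      ∑ r ∈ reps H μ, (L ^ 2)⁻¹ • (fun z : WState n => ((z.2.2 r : ℤ) : ℝ) ^ 2)
    have hmono := walkOp_pow_mono hp hq ha hpqa μ
      (fun z => z.1 = x + (z.2.1 : ZMod n) +
        ∑ r ∈ reps H μ, ((z.2.2 r : ℤ) : ZMod n) * (μ r - r))
      (by
        intro z hz
        simp only
        push_cast
        conv_lhs => rw [hz]
        ring)
      (by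
        intro z hz
        simp only
        push_cast
        conv_lhs => rw [hz]
        ring)
      (by
        intro z hz
        have e := sum_edgeSign_mul h z.1
        simp only [jumpStep]
        push_cast
        simp only [add_mul, Finset.sum_add_distrib]
        rw [e, ← add_assoc, ← hz]
        ring)
      t (fun z => (fun _ => (1 : ℝ)) z.1) Q
      (by
        intro z hz
        have hQ : Q z = ind z.1 + (K ^ 2)⁻¹ * ((z.2.1 : ℝ) - b) ^ 2 +
            ∑ r ∈ reps H μ, (L ^ 2)⁻¹ * ((z.2.2 r : ℤ) : ℝ) ^ 2 := by
          simp [Q, Finset.sum_apply]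
        rw [hQ]
        have hi0 : 0 ≤ ind z.1 := by
          simp only [ind]
          split_ifs <;> norm_num
        have hs0 : 0 ≤ (K ^ 2)⁻¹ * ((z.2.1 : ℝ) - b) ^ 2 := by positivity
        have hc0 : ∀ r ∈ reps H μ, 0 ≤ (L ^ 2)⁻¹ * ((z.2.2 r : ℤ) : ℝ) ^ 2 :=
          fun r _ => by positivity
        have hc1 := Finset.sum_nonneg hc0
        by_cases hj : z.2.1 ∈ J
        · by_cases hc : ∀ r ∈ reps H μ, |z.2.2 r| ≤ M
          · have hmem : z.1 ∈ B := by
              rw [hz]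
              exact mem_confined hj hc
            have : ind z.1 = 1 := by simp [ind, hmem]
            linarith
          · push Not at hc
            obtain ⟨r, hr, hlt⟩ := hc
            have h1 : L < |((z.2.2 r : ℤ) : ℝ)| := by
              have h2 : L < (M : ℝ) + 1 := Nat.lt_floor_add_one L
              have h3 : ((M : ℝ) + 1) ≤ |((z.2.2 r : ℤ) : ℝ)| := by exact_mod_cast hlt
              linarith
            have h2 : L ^ 2 ≤ ((z.2.2 r : ℤ) : ℝ) ^ 2 := by
              rw [← sq_abs ((z.2.2 r : ℤ) : ℝ)]
              gcongr
            have h3 : 1 ≤ (L ^ 2)⁻¹ * ((z.2.2 r : ℤ) : ℝ) ^ 2 := by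
              rw [inv_mul_eq_div, one_le_div (by positivity)]
              exact h2
            have h4 := Finset.single_le_sum hc0 hr
            linarith
        · have h1 : K < |(z.2.1 : ℝ) - b| := by
            by_contra hle
            have hle' := abs_le.mp (not_lt.mp hle)
            apply hj
            rw [hJ, Finset.mem_Icc]
            exact ⟨Int.ceil_le.mpr (by linarith), Int.le_floor.mpr (by linarith)⟩
          have h2 : K ^ 2 ≤ ((z.2.1 : ℝ) - b) ^ 2 := by
            rw [← sq_abs ((z.2.1 : ℝ) - b)]
            gcongr
          have h3 : 1 ≤ (K ^ 2)⁻¹ * ((z.2.1 : ℝ) - b) ^ 2 := by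
            rw [inv_mul_eq_div, one_le_div (by positivity)]
            exact h2
          linarith)
      (x, 0, 0) (by simp)
    have hone : (avg p q a μ)^[t] (fun _ => (1 : ℝ)) = fun _ => 1 := by
      refine Function.iterate_fixed ?_ t
      ext y
      simp only [avg]
      ring
    rw [walkOp_pow_fst p q a μ t (fun _ => 1), hone] at hmono
    simp only [Q, map_add, map_smul, map_sum, walkOp_pow_fst, Pi.add_apply, Pi.smul_apply,
      Finset.sum_apply, smul_eq_mul] at hmono
    rw [walkOp_pow_sq, ← mulVec_cycleP_pow p q a H μ h.2.2.2.2] at hmono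
    have e1 : (cycleP n p q a H μ ^ t).mulVec ind x =
        ∑ y ∈ B, (cycleP n p q a H μ ^ t) x y := by
      simp [Matrix.mulVec, dotProduct, ind]
    have e2 : (K ^ 2)⁻¹ * ((((0 : ℤ) : ℝ) + (p - q) * t - b) ^ 2
        + t * (p + q - (p - q) ^ 2)) ≤ 1 / 4 := by
      rw [← hb, inv_mul_le_iff₀ (by positivity)]
      have : (t : ℝ) * (p + q - (p - q) ^ 2) ≤ t * 1 := by
        gcongr
        nlinarith [sq_nonneg (p - q)]
      push_cast
      nlinarith
    rw [e1] at hmono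
    linarith
  have hsum : ∑ x : ZMod n, (1 / 2 : ℝ) ≤
      ∑ x : ZMod n, ∑ y ∈ confined H μ J M x, (cycleP n p q a H μ ^ t) x y := by
    have h1 := Finset.sum_le_sum fun (x : ZMod n) (_ : x ∈ Finset.univ) => hcheb x
    simp only [Finset.sum_add_distrib] at h1
    rw [Finset.sum_comm (s := Finset.univ) (t := reps H μ)] at h1
    have h2 : ∑ r ∈ reps H μ, ∑ x : ZMod n,
        (L ^ 2)⁻¹ * (walkOp p q a μ ^ t) (fun z => ((z.2.2 r : ℤ) : ℝ) ^ 2) (x, 0, 0) ≤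
        ∑ r ∈ reps H μ, (L ^ 2)⁻¹ * (150 * τ) := by
      refine Finset.sum_le_sum fun r hr => ?_
      rw [← Finset.mul_sum]
      have hrH : r ∈ H := (Finset.mem_filter.mp hr).1
      have := sum_crossing_sq_le hp hq ha hpqa hinv (h.2.2.2.1 r hrH) hτ t ht
      gcongr
    rw [Finset.sum_const, card_reps h, nsmul_eq_mul] at h2
    have h3 : (k : ℝ) * ((L ^ 2)⁻¹ * (150 * τ)) ≤ n / 4 := by
      rw [show (k : ℝ) * ((L ^ 2)⁻¹ * (150 * τ)) = (L ^ 2)⁻¹ * (150 * k * τ) by ring,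
        inv_mul_le_iff₀ (by positivity)]
      linarith
    simp only [Finset.sum_const, Finset.card_univ, ZMod.card, nsmul_eq_mul] at h1 ⊢
    linarith
  obtain ⟨x, _, hx⟩ := Finset.exists_le_of_sum_le Finset.univ_nonempty hsum
  exact ⟨x, confined H μ J M x, hcard x, hx⟩

end Confine

/-! ### Conclusion -/

lemma not_mixedBy_of_card {n : ℕ} [NeZero n] {P : Matrix (ZMod n) (ZMod n) ℝ} {t : ℕ}
    {x : ZMod n} {B : Finset (ZMod n)} (hB : (B.card : ℝ) ≤ n / 4)
    (hP : 1 / 2 ≤ ∑ y ∈ B, (P ^ t) x y) : ¬ mixedBy n P (1 / 16) t := by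
  intro hmix
  have h1 := hmix x
  have hn : (0 : ℝ) < n := by exact_mod_cast Nat.pos_of_ne_zero (NeZero.ne n)
  have h2 : ∑ y ∈ B, ((P ^ t) x y - 1 / n) ≤ ∑ y : ZMod n, |(P ^ t) x y - 1 / n| :=
    (Finset.sum_le_sum fun y _ => le_abs_self _).trans
      (Finset.sum_le_univ_sum_of_nonneg fun y => abs_nonneg _)
  rw [Finset.sum_sub_distrib, Finset.sum_const, nsmul_eq_mul] at h2
  have h3 : (B.card : ℝ) * (1 / n) ≤ 1 / 4 := by
    rw [mul_one_div, div_le_iff₀ hn]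
    linarith
  linarith

lemma exists_isConfig {n : ℕ} [NeZero n] {k : ℕ} (hn : 2 * k ≤ n) :
    ∃ (H : Finset (ZMod n)) (μ : ZMod n → ZMod n), IsConfig n k H μ := by
  -- match `2 i` with `2 i + 1` for `i < k`
  let ν : ℕ → ℕ := fun m => if m < 2 * k then (if m % 2 = 0 then m + 1 else m - 1) else m
  let μ : ZMod n → ZMod n := fun x => (ν x.val : ZMod n)
  have hν : ∀ x : ZMod n, (μ x).val = ν x.val := by
    intro x
    have := ZMod.val_lt x
    refine ZMod.val_natCast_of_lt ?_
    simp only [ν]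
    split_ifs <;> omega
  refine ⟨Finset.univ.filter fun x => x.val < 2 * k, μ, ?_, ?_, ?_, ?_, ?_⟩
  · have : (Finset.univ.filter fun x : ZMod n => x.val < 2 * k) =
        (Finset.range (2 * k)).image (fun m : ℕ => (m : ZMod n)) := by
      ext x
      simp only [Finset.mem_filter, Finset.mem_univ, true_and, Finset.mem_image,
        Finset.mem_range]
      constructor
      · intro hx
        exact ⟨x.val, hx, ZMod.natCast_zmod_val x⟩
      · rintro ⟨m, hm, rfl⟩
        rwa [ZMod.val_natCast_of_lt (by omega)]
    rw [this, Finset.card_image_of_injOn, Finset.card_range]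
    intro i hi j hj hij
    simp only [Finset.coe_range, Set.mem_Iio] at hi hj
    have := congrArg ZMod.val hij
    simp only at this
    rwa [ZMod.val_natCast_of_lt (by omega), ZMod.val_natCast_of_lt (by omega)] at this
  · intro x hx
    simp only [Finset.mem_filter, Finset.mem_univ, true_and] at hx ⊢
    rw [hν]
    simp only [ν]
    split_ifs <;> omega
  · intro x
    apply ZMod.val_injective n
    rw [hν, hν]
    simp only [ν]
    split_ifs <;> omega
  · intro x hx he
    simp only [Finset.mem_filter, Finset.mem_univ, true_and] at hx
    have := congrArg ZMod.val he
    rw [hν] at this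
    simp only [ν] at this
    split_ifs at this <;> omega
  · intro x hx
    simp only [Finset.mem_filter, Finset.mem_univ, true_and] at hx
    apply ZMod.val_injective n
    rw [hν]
    simp [ν, hx]

/-- there are `γ* > 0` and `ε* > 0` so that the probability (over the random
hubs and matching) that `t_mix(ε*) ≥ γ* · n^{(k+2)/(k+1)}` tends to `1` as `n → ∞`. -/
theorem mixing_time_lower_bound (k : ℕ) (hk : 1 ≤ k) (p q a : ℝ)
    (hp : 0 < p) (hq : 0 < q) (ha : 0 < a) (hpqa : p + q + a ≤ 1) (hpq : q < p) :
    ∃ (γstar εstar : ℝ), 0 < γstar ∧ 0 < εstar ∧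
      Filter.Tendsto (fun n : ℕ =>
          if h : n = 0 then (0 : ℝ) else
            letI : NeZero n := ⟨h⟩
            configProb n k (fun H μ =>
              ∀ t : ℕ, (t : ℝ) < γstar * (n : ℝ) ^ (((k : ℝ) + 2) / ((k : ℝ) + 1)) →
                ¬ mixedBy n (cycleP n p q a H μ) εstar t))
        Filter.atTop (nhds 1) := by
  -- scale `δ`: with `y = n ^ (1 / (2 (k + 1)))` and `τ = (δ y ^ (k + 2)) ^ 2` the confining set has
  -- at most `6 (3 M) ^ k δ ^ (k + 1) y ^ (2 k + 2) ≤ n / 4` elements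
  set M : ℝ := 600 * k with hM
  have hk1 : (1 : ℝ) ≤ k := by exact_mod_cast hk
  have hM1 : 1 ≤ M := by linarith
  have hC1 : (1 : ℝ) ≤ (3 * M) ^ k := one_le_pow₀ (by linarith)
  set δ : ℝ := 1 / (24 * (3 * M) ^ k) with hδ
  have hδ0 : 0 < δ := by positivity
  have hδ1 : δ ≤ 1 := by
    rw [hδ, div_le_one (by positivity)]
    linarith
  refine ⟨δ ^ 2, 1 / 16, by positivity, by norm_num, ?_⟩
  refine tendsto_const_nhds.congr' ?_
  have hy : Filter.Tendsto (fun n : ℕ => (n : ℝ) ^ (1 / (2 * ((k : ℝ) + 1)))) Filter.atTop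
      Filter.atTop :=
    (tendsto_rpow_atTop (by positivity)).comp tendsto_natCast_atTop_atTop
  filter_upwards [hy.eventually_ge_atTop (2 / δ), Filter.eventually_ge_atTop (2 * k)]
    with n hny hnk
  have hn0 : n ≠ 0 := by omega
  rw [dif_neg hn0]
  have : NeZero n := ⟨hn0⟩
  set y : ℝ := (n : ℝ) ^ (1 / (2 * ((k : ℝ) + 1))) with hydef
  have hδy : 2 ≤ δ * y := by
    have := mul_le_mul_of_nonneg_left hny hδ0.le
    rwa [mul_div_cancel₀ _ hδ0.ne'] at this
  have hy1 : 1 ≤ y := by nlinarith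
  have hn' : (0 : ℝ) ≤ n := Nat.cast_nonneg n
  have hyn : y ^ (2 * k + 2) = n := by
    rw [hydef, ← Real.rpow_natCast, ← Real.rpow_mul hn']
    have : 1 / (2 * ((k : ℝ) + 1)) * ((2 * k + 2 : ℕ) : ℝ) = 1 := by
      push_cast
      field_simp
    rw [this, Real.rpow_one]
  have hyα : (n : ℝ) ^ (((k : ℝ) + 2) / ((k : ℝ) + 1)) = (y ^ (k + 2)) ^ 2 := by
    rw [← pow_mul, hydef, ← Real.rpow_natCast, ← Real.rpow_mul hn']
    congr 1
    push_cast
    field_simp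
  have hτ : 2 ≤ δ * y ^ (k + 2) := by
    have : y ≤ y ^ (k + 2) := le_self_pow₀ hy1 (by omega)
    nlinarith
  have key : ∀ H μ, IsConfig n k H μ → ∀ t : ℕ,
      (t : ℝ) < δ ^ 2 * (n : ℝ) ^ (((k : ℝ) + 2) / ((k : ℝ) + 1)) →
        ¬ mixedBy n (cycleP n p q a H μ) (1 / 16) t := by
    intro H μ hcfg t ht
    rw [hyα, ← mul_pow] at ht
    obtain ⟨x, B, hB, hP⟩ := exists_confined (K := 2 * (δ * y ^ (k + 2))) (L := M * (δ * y))
      hp hq ha hpqa hcfg (τ := (δ * y ^ (k + 2)) ^ 2) (by nlinarith) (by positivity)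
      (by positivity) (by nlinarith)
      (by
        rw [← hyn, ← hM]
        have e : y ^ (2 * k + 2) * (M * (δ * y)) ^ 2 = M ^ 2 * (δ * y ^ (k + 2)) ^ 2 := by ring
        rw [e]
        have : M ≤ M ^ 2 := by nlinarith
        gcongr) t ht.le
    refine not_mixedBy_of_card (hB.trans ?_) hP
    have h1 : 2 * (2 * (δ * y ^ (k + 2))) + 1 ≤ 6 * (δ * y ^ (k + 2)) := by linarith
    have h2 : 2 * (M * (δ * y)) + 1 ≤ 3 * (M * (δ * y)) := by nlinarith
    calc (2 * (2 * (δ * y ^ (k + 2))) + 1) * (2 * (M * (δ * y)) + 1) ^ k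
        ≤ (6 * (δ * y ^ (k + 2))) * (3 * (M * (δ * y))) ^ k := by gcongr
      _ = 6 * (3 * M) ^ k * δ * δ ^ k * y ^ (2 * k + 2) := by
          rw [show 3 * (M * (δ * y)) = (3 * M) * δ * y by ring, mul_pow, mul_pow]
          ring
      _ ≤ 6 * (3 * M) ^ k * δ * 1 * y ^ (2 * k + 2) := by
          gcongr
          exact pow_le_one₀ hδ0.le hδ1
      _ = n / 4 := by
          rw [hyn, hδ]
          field_simp
          norm_num
  unfold configProb
  have hfilter : (Finset.univ.filter (fun cfg : Finset (ZMod n) × (ZMod n → ZMod n) =>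
      IsConfig n k cfg.1 cfg.2 ∧ ∀ t : ℕ,
        (t : ℝ) < δ ^ 2 * (n : ℝ) ^ (((k : ℝ) + 2) / ((k : ℝ) + 1)) →
        ¬ mixedBy n (cycleP n p q a cfg.1 cfg.2) (1 / 16) t)) =
      Finset.univ.filter (fun cfg : Finset (ZMod n) × (ZMod n → ZMod n) =>
        IsConfig n k cfg.1 cfg.2) :=
    Finset.filter_congr fun cfg _ => ⟨fun h => h.1, fun h => ⟨h, key _ _ h⟩⟩
  rw [hfilter, div_self]
  obtain ⟨H, μ, hcfg⟩ := exists_isConfig hnk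
  rw [Nat.cast_ne_zero, Finset.card_ne_zero]
  exact ⟨(H, μ), by simpa using hcfg⟩
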